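/- There exists a constant C > 0, depending only on d and α, such that for every ε ∈ (0,1/20), with Θ = 2·arctan(ε), and every x ∈ Π_ε ∩ F: the fractional Laplacian Δ^{α/2}(h·(s*_ε - s_ε))(x) exists and |Δ^{α/2}(h·(s*_ε - s_ε))(x)| ≤ C·ε^α. -/

import Mathlib

open MeasureTheory Metric Real Set Filter RealInnerProductSpace
open scoped ENNReal

noncomputable section

/-- Euclidean space ℝ^d. -/
abbrev Ed (d : ℕ) := EuclideanSpace ℝ (Fin d)

/-- The constant `A_{d,α}`. -/
noncomputable def fracConst (d : ℕ) (α : ℝ) : ℝ :=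
  α * 2 ^ (α - 1) * π ^ (-(d : ℝ) / 2) * Real.Gamma (((d : ℝ) + α) / 2) / Real.Gamma (1 - α / 2)

/-- The fractional Laplacian `Δ^{α/2} Φ (x)` exists and equals `L`. -/
def fracLapAt (d : ℕ) (α : ℝ) (Φ : Ed d → ℝ) (x : Ed d) (L : ℝ) : Prop :=
  Filter.Tendsto
    (fun ε : ℝ => fracConst d α *
      ∫ y in {y : Ed d | ε < ‖y - x‖}, (Φ y - Φ x) * ‖y - x‖ ^ (-(d : ℝ) - α))
    (nhdsWithin 0 (Set.Ioi 0)) (nhds L)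

/-- The last coordinate of a vector in ℝ^d. -/
def lastCoord (d : ℕ) (x : Ed d) : ℝ :=
  if h : 0 < d then x ⟨d - 1, Nat.sub_lt h Nat.one_pos⟩ else 0

/-- The unit vector `e_d = (0,…,0,1)`. -/
def eLast (d : ℕ) : Ed d :=
  if h : 0 < d then EuclideanSpace.single ⟨d - 1, Nat.sub_lt h Nat.one_pos⟩ (1 : ℝ) else 0

/-- The right circular cone `Γ_Θ` of angle `Θ`. -/
def cone (d : ℕ) (Θ : ℝ) : Set (Ed d) := {x | ‖x‖ * Real.cos Θ < lastCoord d x}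

/-- The unit sphere `S^{d-1}` in ℝ^d. -/
def unitSphere (d : ℕ) : Set (Ed d) := Metric.sphere (0 : Ed d) 1

/-- The spherical cap `B_Θ`. -/
def capB (d : ℕ) (Θ : ℝ) : Set (Ed d) := {θ | θ ∈ unitSphere d ∧ Real.cos Θ < lastCoord d θ}

/-- The surface measure `σ`: the (d-1)-dimensional Hausdorff measure. -/
noncomputable def sphMeasure (d : ℕ) : Measure (Ed d) := μH[(d : ℝ) - 1]

/-- The kernel `u_λ(t)`. -/
noncomputable def uKernel (d : ℕ) (α lam t : ℝ) : ℝ :=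
  ∫ r in Set.Ioi (0 : ℝ), r ^ ((d : ℝ) + lam - 1) * (r ^ 2 - 2 * r * t + 1) ^ (-((d : ℝ) + α) / 2)

/-- The kernel `u_λ(t)` as a value in `[0,∞]`. -/
noncomputable def uKernelE (d : ℕ) (α lam t : ℝ) : ℝ≥0∞ :=
  ∫⁻ r in Set.Ioi (0 : ℝ),
    ENNReal.ofReal (r ^ ((d : ℝ) + lam - 1) * (r ^ 2 - 2 * r * t + 1) ^ (-((d : ℝ) + α) / 2))

/-- The spherical fractional Laplacian `Δ_S^{α/2} φ (η)` exists and equals `L`. -/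
def sphFracLapAt (d : ℕ) (α : ℝ) (φ : Ed d → ℝ) (η : Ed d) (L : ℝ) : Prop :=
  Filter.Tendsto
    (fun ε : ℝ => fracConst d α *
      ∫ θ in {θ : Ed d | θ ∈ unitSphere d ∧ ⟪θ, η⟫ ≤ Real.cos ε},
        (φ θ - φ η) * uKernel d α 0 ⟪θ, η⟫ ∂(sphMeasure d))
    (nhdsWithin 0 (Set.Ioi 0)) (nhds L)

/-- The integrand of the radial operator `R_λ`. -/
noncomputable def RopIntegrand (d : ℕ) (α lam : ℝ) (φ : Ed d → ℝ) (η θ : Ed d) : ℝ :=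
  φ θ * (uKernel d α lam ⟪θ, η⟫ - uKernel d α 0 ⟪θ, η⟫)

/-- The radial operator `R_λ φ (η)`. -/
noncomputable def Rop (d : ℕ) (α lam : ℝ) (φ : Ed d → ℝ) (η : Ed d) : ℝ :=
  fracConst d α * ∫ θ in unitSphere d, RopIntegrand d α lam φ η θ ∂(sphMeasure d)

/-- The modulus `ω`. -/
noncomputable def omegaFn (α Θ : ℝ) : ℝ :=
  if α < 1 then Θ ^ α else if α = 1 then Θ * |Real.log Θ| else Θ

/-- The Euler beta function. -/
noncomputable def eulerBeta (a b : ℝ) : ℝ := Real.Gamma a * Real.Gamma b / Real.Gamma (a + b)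

/-- The constant `B_{d,α}`. -/
noncomputable def Bconst (d : ℕ) (α : ℝ) : ℝ :=
  Real.Gamma (((d : ℝ) + α) / 2) / (π ^ ((3 : ℝ) / 2) * Real.Gamma (((d : ℝ) - 1 + α) / 2)) *
    Real.sin (π * α / 2) * eulerBeta (1 + α / 2) (((d : ℝ) - 1) / 2)

/-- The constant `C_{d-1,α}`. -/
noncomputable def Cexit (d : ℕ) (α : ℝ) : ℝ :=
  Real.Gamma (((d : ℝ) - 1) / 2) /
    (2 ^ α * Real.Gamma (((d : ℝ) - 1 + α) / 2) * Real.Gamma (1 + α / 2))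

/-- The constant `C̃_{d,α}`. -/
noncomputable def Ctilde (d : ℕ) (α : ℝ) : ℝ :=
  π ^ (((d : ℝ) - 1) / 2) / Real.Gamma (((d : ℝ) - 1) / 2) * Cexit d α *
    eulerBeta (1 + α / 2) (((d : ℝ) - 1) / 2)

/-- The norm `|ỹ|` of the first `d-1` coordinates of `y`. -/
noncomputable def tnorm (d : ℕ) (y : Ed d) : ℝ :=
  Real.sqrt (∑ i : Fin d, if (i : ℕ) < d - 1 then (y i) ^ 2 else 0)

/-- The function `s_ε`. -/
noncomputable def sExit (d : ℕ) (α ε : ℝ) (y : Ed d) : ℝ :=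
  Cexit d α * (max (ε ^ 2 - tnorm d y ^ 2) 0) ^ (α / 2)

/-- The cylinder `Π_ε`. -/
def cylPi (d : ℕ) (ε : ℝ) : Set (Ed d) := {y | tnorm d y < ε}

/-- The hyperplane `F = {y : y_d = 1}`. -/
def hyperF (d : ℕ) : Set (Ed d) := {y | lastCoord d y = 1}

/-- The Riesz kernel `h(y) = |y|^{α-d}`. -/
noncomputable def rieszH (d : ℕ) (α : ℝ) (y : Ed d) : ℝ := ‖y‖ ^ (α - (d : ℝ))

/-- The inversion `T x = x/|x|²`. -/
noncomputable def inversion (d : ℕ) (x : Ed d) : Ed d := (‖x‖ ^ 2)⁻¹ • x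

/-- The shifted cone `V_Θ = Γ_Θ + e_d/2`. -/
def Vcone (d : ℕ) (Θ : ℝ) : Set (Ed d) := {y | y - (1 / 2 : ℝ) • eLast d ∈ cone d Θ}

/-- The spindle `L_ε = T(V_Θ)` with `ε = tan(Θ/2)`, i.e. `Θ = 2 arctan ε`. -/
def Lspindle (d : ℕ) (ε : ℝ) : Set (Ed d) := inversion d '' Vcone d (2 * Real.arctan ε)

/-- The curvilinear projection `y* = T(e_d/2 + (Ty - e_d/2)/(2|Ty - e_d/2|))`. -/
noncomputable def ystar (d : ℕ) (y : Ed d) : Ed d :=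
  inversion d ((1 / 2 : ℝ) • eLast d +
    (2 * ‖inversion d y - (1 / 2 : ℝ) • eLast d‖)⁻¹ • (inversion d y - (1 / 2 : ℝ) • eLast d))

open scoped Classical in
/-- The function `s*_ε`. -/
noncomputable def sStar (d : ℕ) (α ε : ℝ) (y : Ed d) : ℝ :=
  if y ∈ Lspindle d ε then Cexit d α * (max (ε ^ 2 - tnorm d (ystar d y) ^ 2) 0) ^ (α / 2)
  else 0

open scoped Classical in
/-- The function `u = K(h s*_ε)`, i.e. `u(y) = s*_ε(Ty)`, `u(0) = 0`. -/
noncomputable def uFn (d : ℕ) (α ε : ℝ) (y : Ed d) : ℝ :=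
  if y = 0 then 0 else sStar d α ε (inversion d y)

/-- The spherical profile `φ_Θ`. -/
noncomputable def profileFn (d : ℕ) (α Θ : ℝ) (θ : Ed d) : ℝ :=
  2 ^ α * Cexit d α *
    (max (Real.tan (Θ / 2) ^ 2 - ‖eLast d - θ‖ ^ 2 / ‖eLast d + θ‖ ^ 2) 0) ^ (α / 2)

/-- Laplacian on ℝ^d as the sum of pure second partial derivatives. -/
noncomputable def lapE (d : ℕ) (u : Ed d → ℝ) (x : Ed d) : ℝ :=
  ∑ i : Fin d,
    iteratedFDeriv ℝ 2 u x ![EuclideanSpace.single i (1 : ℝ), EuclideanSpace.single i (1 : ℝ)]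

/-- Laplacian on ℝ^d × ℝ as the sum of the d+1 pure second partial derivatives. -/
noncomputable def lapProd (d : ℕ) (U : Ed d × ℝ → ℝ) (p : Ed d × ℝ) : ℝ :=
  (∑ i : Fin d, iteratedFDeriv ℝ 2 U p
      ![(EuclideanSpace.single i (1 : ℝ), (0 : ℝ)), (EuclideanSpace.single i (1 : ℝ), (0 : ℝ))]) +
    iteratedFDeriv ℝ 2 U p ![((0 : Ed d), (1 : ℝ)), ((0 : Ed d), (1 : ℝ))]

/-- The Poisson kernel `P_t(x)` for the upper half-space. -/
noncomputable def poissonK (d : ℕ) (t : ℝ) (x : Ed d) : ℝ :=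
  Real.Gamma (((d : ℝ) + 1) / 2) / π ^ (((d : ℝ) + 1) / 2) * t *
    (‖x‖ ^ 2 + t ^ 2) ^ (-((d : ℝ) + 1) / 2)

end

/-!
The principal value converges absolutely. Put `ρ = |ỹ|`, `ρ* = |ỹ*|` and `t = y_d - 1`. Near `e_d`
both exit functions are the same profile `C (ε² - ·²)₊^{α/2}`, evaluated at `ρ*` and at `ρ`. The
circles through `0` and `2 e_d` are given by `ρ² + t² + κ ρ = 1`, so that
`(ρ* - ρ) (1 + ρ* ρ) = ρ* t²`: the two functions agree on `F`, both vanish off `Π_ε`, and in `Π_ε`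
the arguments of the power `α/2` differ by at most `2 ε² t²`. Trading regularity at the boundary of
`Π_ε` for decay in `t`, one gets `|s*_ε - s_ε| ≤ 2 C ε^α (ε² - ρ²)^{-η} |t|^{α + 2η}` for small
`η > 0`. As `|t| ≤ |y - x|`, the integrand near `x` is at most a constant times
`ε^α (ε² - ρ²)^{-η} |y - x|^{2η - d}` on `Π_ε`. In polar coordinates around `x` each ray contributes
a Beta integral, whence a bound uniform in `ε` and `x`. Away from `x` it is enough that
`|s*_ε - s_ε| ≤ C ε^α`.
-/

section PowerInequalities

lemma one_sub_rpow_le_one_sub_rpow {u β θ : ℝ} (hu : u ∈ Icc (0 : ℝ) 1) (hβ : β ≤ 1) (hθ : θ ≤ 1) :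
    1 - u ^ β ≤ (1 - u) ^ θ := by
  have hle : ∀ {v γ : ℝ}, v ∈ Icc (0 : ℝ) 1 → γ ≤ 1 → v ≤ v ^ γ := fun {v γ} hv hγ => by
    rcases hv.1.eq_or_lt with rfl | hv0
    · exact rpow_nonneg le_rfl _
    · simpa using rpow_le_rpow_of_exponent_ge hv0 hv.2 hγ
  linarith [hle hu hβ, hle (⟨sub_nonneg.2 hu.2, sub_le_self 1 hu.1⟩ : 1 - u ∈ Icc (0 : ℝ) 1) hθ]

lemma rpow_sub_rpow_le_mul_sub_rpow {a b β θ : ℝ} (ha : 0 < a) (hb : 0 ≤ b) (hab : b ≤ a)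
    (hβ : β ≤ 1) (hθ : θ ≤ 1) :
    a ^ β - b ^ β ≤ a ^ (β - θ) * (a - b) ^ θ := by
  have hu : b / a ∈ Icc (0 : ℝ) 1 := ⟨by positivity, (div_le_one ha).2 hab⟩
  calc
    a ^ β - b ^ β = a ^ β * (1 - (b / a) ^ β) := by
      rw [div_rpow hb ha.le]
      field_simp
    _ ≤ a ^ β * (1 - b / a) ^ θ := by
      gcongr
      exact one_sub_rpow_le_one_sub_rpow hu hβ hθ
    _ = a ^ (β - θ) * (a - b) ^ θ := by
      rw [one_sub_div ha.ne', div_rpow (sub_nonneg.2 hab) ha.le, rpow_sub ha]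
      field_simp

lemma ennreal_rpow_neg_le_rpow_neg {a b : ℝ≥0∞} {s : ℝ} (hs : 0 ≤ s) (hab : a ≤ b) :
    b ^ (-s) ≤ a ^ (-s) := by
  simpa only [ENNReal.rpow_neg, ENNReal.inv_le_inv] using ENNReal.rpow_le_rpow hab hs

lemma enorm_rpow_le_enorm_rpow {E : Type*} [NormedAddCommGroup E] (z : E) (s : ℝ) :
    ‖‖z‖ ^ s‖ₑ ≤ ‖z‖ₑ ^ s := by
  rcases eq_or_ne z 0 with rfl | hz
  · rcases lt_trichotomy s 0 with hs | rfl | hs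
    · simp [ENNReal.zero_rpow_of_neg hs]
    · simp
    · simp [hs, zero_rpow hs.ne']
  · rw [← ofReal_norm, norm_of_nonneg (by positivity), ← ofReal_norm,
      ENNReal.ofReal_rpow_of_pos (norm_pos_iff.2 hz)]

end PowerInequalities

section RayIntegrals

open ProbabilityTheory (beta beta_pos lintegral_betaPDF lintegral_betaPDF_eq_one)

lemma lintegral_Ioo_zero_one_rpow_mul_rpow {u v : ℝ} (hu : 0 < u) (hv : 0 < v) :
    ∫⁻ t in Ioo (0 : ℝ) 1, ENNReal.ofReal (t ^ (u - 1) * (1 - t) ^ (v - 1)) =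
      ENNReal.ofReal (beta u v) := by
  have hB : 0 < beta u v := beta_pos hu hv
  calc
    _ = ∫⁻ t in Ioo (0 : ℝ) 1, ENNReal.ofReal (beta u v) *
          ENNReal.ofReal (1 / beta u v * t ^ (u - 1) * (1 - t) ^ (v - 1)) := by
      refine lintegral_congr fun t => ?_
      rw [← ENNReal.ofReal_mul hB.le]
      congr 1
      field_simp
    _ = _ := by
      rw [lintegral_const_mul _ (by fun_prop), ← lintegral_betaPDF,
        lintegral_betaPDF_eq_one hu hv, mul_one]

lemma lintegral_Ioo_rpow_mul_sub_rpow {u v R : ℝ} (hu : 0 < u) (hv : 0 < v) (hR : 0 < R) :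
    ∫⁻ r in Ioo 0 R, ENNReal.ofReal (r ^ (u - 1) * (R - r) ^ (v - 1)) =
      ENNReal.ofReal (R ^ (u + v - 1) * beta u v) := by
  have himage : Ioo 0 R = (fun t => R * t) '' Ioo 0 1 := by
    rw [image_mul_left_Ioo hR, mul_zero, mul_one]
  rw [himage, lintegral_image_eq_lintegral_abs_deriv_mul measurableSet_Ioo
    (fun t _ => by simpa using ((hasDerivAt_id t).const_mul R).hasDerivWithinAt)
    (mul_right_injective₀ hR.ne').injOn, ENNReal.ofReal_mul (by positivity),
    ← lintegral_Ioo_zero_one_rpow_mul_rpow hu hv, ← lintegral_const_mul _ (by fun_prop)]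
  refine setLIntegral_congr_fun measurableSet_Ioo fun t ht => ?_
  rw [← ENNReal.ofReal_mul (abs_nonneg R), ← ENNReal.ofReal_mul (by positivity),
    show R - R * t = R * (1 - t) by ring, mul_rpow hR.le ht.1.le,
    mul_rpow hR.le (sub_nonneg.2 ht.2.le), abs_of_pos hR,
    show u + v - 1 = 1 + (u - 1) + (v - 1) by ring, rpow_add hR, rpow_add hR, rpow_one]
  ring_nf

variable {F : Type*} [NormedAddCommGroup F] [InnerProductSpace ℝ F]

lemma exists_pos_norm_add_smul_eq {v w : F} {ε : ℝ} (hv : ‖v‖ < ε) (hw : w ≠ 0) :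
    ∃ R : ℝ, 0 < R ∧ ‖v + R • w‖ = ε := by
  set T := (ε + ‖v‖) / ‖w‖
  have hw' : 0 < ‖w‖ := norm_pos_iff.2 hw
  have hT : 0 ≤ T := div_nonneg (by linarith [norm_nonneg v]) hw'.le
  have hend : ε ≤ ‖v + T • w‖ := by
    have hTw : ‖T • w‖ = ε + ‖v‖ := by
      rw [norm_smul, norm_of_nonneg hT, div_mul_cancel₀ _ hw'.ne']
    linarith [norm_sub_le (v + T • w) v, congrArg norm (add_sub_cancel_left v (T • w))]
  obtain ⟨R, hR, hRε⟩ := intermediate_value_Icc hT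
    (f := fun r => ‖v + r • w‖) (by fun_prop) ⟨by simpa using hv.le, hend⟩
  refine ⟨R, hR.1.lt_of_ne ?_, hRε⟩
  rintro rfl
  simp [hv.ne] at hRε

/-- Stewart's theorem. -/
lemma norm_add_smul_sq_mul (v w : F) (r R : ℝ) :
    R * ‖v + r • w‖ ^ 2 =
      (R - r) * ‖v‖ ^ 2 + r * ‖v + R • w‖ ^ 2 - R * (r * (R - r)) * ‖w‖ ^ 2 := by
  simp only [norm_add_sq_real, norm_smul, inner_smul_right, mul_pow, norm_eq_abs, sq_abs]
  ring

lemma lt_and_norm_sq_mul_le_of_norm_add_smul_lt {v w : F} {ε r R : ℝ} (hv : ‖v‖ < ε) (hR : 0 < R)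
    (hRε : ‖v + R • w‖ = ε) (hr : 0 < r) (hrε : ‖v + r • w‖ < ε) :
    r < R ∧ ‖w‖ ^ 2 * (r * (R - r)) ≤ ε ^ 2 - ‖v + r • w‖ ^ 2 := by
  have hv2 : 0 < ε ^ 2 - ‖v‖ ^ 2 := sub_pos.2 (pow_lt_pow_left₀ hv (norm_nonneg v) two_ne_zero)
  have hr2 : 0 < ε ^ 2 - ‖v + r • w‖ ^ 2 :=
    sub_pos.2 (pow_lt_pow_left₀ hrε (norm_nonneg _) two_ne_zero)
  have hstewart : R * (ε ^ 2 - ‖v + r • w‖ ^ 2) =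
      (R - r) * ((ε ^ 2 - ‖v‖ ^ 2) + R * r * ‖w‖ ^ 2) := by
    linear_combination (-r * (‖v + R • w‖ + ε)) * hRε - norm_add_smul_sq_mul v w r R
  have hrR : r < R := by
    have h := (mul_pos hR hr2).trans_eq hstewart
    exact sub_pos.1 (pos_of_mul_pos_left h (by positivity))
  refine ⟨hrR, le_of_mul_le_mul_left ?_ hR⟩
  nlinarith [mul_pos (sub_pos.2 hrR) hv2]

lemma rpow_neg_mul_rpow_le {c q r R η : ℝ} (hc : 0 < c) (hr : r ∈ Ioo 0 R) (hη : 0 ≤ η)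
    (hq : c ^ 2 * (r * (R - r)) ≤ q) :
    q ^ (-η) * r ^ (2 * η - 1) ≤ c ^ (-(2 * η)) * (r ^ (η - 1) * (R - r) ^ (-η)) := by
  have hr0 : 0 < r := hr.1
  have hRr : 0 < R - r := sub_pos.2 hr.2
  calc
    _ ≤ (c ^ 2 * (r * (R - r))) ^ (-η) * r ^ (2 * η - 1) := by
      gcongr ?_ * _
      exact rpow_le_rpow_of_nonpos (by positivity) hq (by linarith)
    _ = _ := by
      rw [mul_rpow (by positivity) (by positivity), mul_rpow hr0.le hRr.le,
        ← rpow_natCast, ← rpow_mul hc.le, show η - 1 = -η + (2 * η - 1) by ring,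
        rpow_add hr0]
      push_cast
      ring_nf

lemma lintegral_ray_le {v w : F} {ε η : ℝ} (hv : ‖v‖ < ε) (hη0 : 0 < η) (hη1 : η < 1) :
    ∫⁻ r in Ioi (0 : ℝ) ∩ {r | ‖v + r • w‖ < ε},
        ENNReal.ofReal ((ε ^ 2 - ‖v + r • w‖ ^ 2) ^ (-η) * r ^ (2 * η - 1)) ≤
      ENNReal.ofReal (beta η (1 - η)) * ‖w‖ₑ ^ (-(2 * η)) := by
  have hB : 0 < beta η (1 - η) := beta_pos hη0 (sub_pos.2 hη1)
  rcases eq_or_ne w 0 with rfl | hw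
  · simp [ENNReal.zero_rpow_of_neg, hη0, hB]
  have hw' : 0 < ‖w‖ := norm_pos_iff.2 hw
  obtain ⟨R, hR, hRε⟩ := exists_pos_norm_add_smul_eq hv hw
  have hray := fun (r : ℝ) (hr : r ∈ Ioi (0 : ℝ) ∩ {r | ‖v + r • w‖ < ε}) =>
    lt_and_norm_sq_mul_le_of_norm_add_smul_lt hv hR hRε hr.1 hr.2
  calc
    _ ≤ ∫⁻ r in Ioi (0 : ℝ) ∩ {r | ‖v + r • w‖ < ε},
          ENNReal.ofReal (‖w‖ ^ (-(2 * η))) *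
            ENNReal.ofReal (r ^ (η - 1) * (R - r) ^ (1 - η - 1)) := by
      refine setLIntegral_mono' (measurableSet_Ioi.inter
        (isOpen_lt (by fun_prop) continuous_const).measurableSet) fun r hr => ?_
      rw [← ENNReal.ofReal_mul (by positivity), sub_sub_cancel_left]
      exact ENNReal.ofReal_le_ofReal
        (rpow_neg_mul_rpow_le hw' ⟨hr.1, (hray r hr).1⟩ hη0.le (hray r hr).2)
    _ ≤ ∫⁻ r in Ioo 0 R, ENNReal.ofReal (‖w‖ ^ (-(2 * η))) *
          ENNReal.ofReal (r ^ (η - 1) * (R - r) ^ (1 - η - 1)) :=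
      lintegral_mono_set fun r hr => ⟨hr.1, (hray r hr).1⟩
    _ = _ := by
      rw [lintegral_const_mul _ (by fun_prop),
        lintegral_Ioo_rpow_mul_sub_rpow hη0 (sub_pos.2 hη1) hR, ← ofReal_norm,
        ENNReal.ofReal_rpow_of_pos hw', mul_comm]
      simp

end RayIntegrals

section HaarIntegrals

variable {E F : Type*} [NormedAddCommGroup E] [NormedSpace ℝ E] [FiniteDimensional ℝ E]
  [MeasurableSpace E] [BorelSpace E] [NormedAddCommGroup F]
  (μ : Measure E) [μ.IsAddHaarMeasure]

local notation "dim" => Module.finrank ℝ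

lemma lintegral_eq_lintegral_toSphere [Nontrivial E] {f : E → ℝ≥0∞} (hf : Measurable f) :
    ∫⁻ z, f z ∂μ = ∫⁻ ω : sphere (0 : E) 1, (∫⁻ r in Ioi (0 : ℝ),
      ENNReal.ofReal (r ^ (dim E - 1)) * f (r • (ω : E))) ∂μ.toSphere := by
  calc
    ∫⁻ z, f z ∂μ = ∫⁻ z : ({(0)}ᶜ : Set E), f z ∂(μ.comap (↑)) := by
      rw [lintegral_subtype_comap (measurableSet_singleton _).compl f,
        restrict_compl_singleton]
    _ = ∫⁻ q, f (q.2.1 • (q.1 : E)) ∂μ.toSphere.prod (.volumeIoiPow (dim E - 1)) := by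
      rw [← μ.measurePreserving_homeomorphUnitSphereProd.lintegral_comp_emb
        (Homeomorph.measurableEmbedding _)]
      refine lintegral_congr fun z => ?_
      have hz : ‖(z : E)‖ ≠ 0 := norm_ne_zero_iff.2 z.2
      simp [smul_smul, hz]
    _ = _ := by
      rw [lintegral_prod _ (by fun_prop)]
      refine lintegral_congr fun ω => ?_
      rw [Measure.volumeIoiPow, lintegral_withDensity_eq_lintegral_mul _ (by fun_prop)
        (by fun_prop)]
      exact lintegral_subtype_comap measurableSet_Ioi
        (fun r : ℝ => ENNReal.ofReal (r ^ (dim E - 1)) * f (r • (ω : E)))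

lemma lintegral_eq_lintegral_toSphere_add_smul [Nontrivial E] {f : E → ℝ≥0∞} (hf : Measurable f)
    (x : E) :
    ∫⁻ y, f y ∂μ = ∫⁻ ω : sphere (0 : E) 1, (∫⁻ r in Ioi (0 : ℝ),
      ENNReal.ofReal (r ^ (dim E - 1)) * f (x + r • (ω : E))) ∂μ.toSphere := by
  rw [← lintegral_add_left_eq_self f x]
  exact lintegral_eq_lintegral_toSphere μ (hf.comp (measurable_const_add x))

lemma lintegral_Ioo_zero_one_pow (n : ℕ) :
    ∫⁻ r in Ioo (0 : ℝ) 1, ENNReal.ofReal (r ^ n) = (n + 1 : ℝ≥0∞)⁻¹ := by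
  rw [Measure.restrict_congr_set Ioo_ae_eq_Ioc, ← ofReal_integral_eq_lintegral_ofReal
    (intervalIntegral.intervalIntegrable_pow n).1
    ((ae_restrict_mem measurableSet_Ioc).mono fun r hr => pow_nonneg hr.1.le n),
    ← intervalIntegral.integral_of_le zero_le_one, integral_pow]
  simp [ENNReal.ofReal_inv_of_pos (by positivity : (0 : ℝ) < n + 1), ENNReal.ofReal_add]

lemma lintegral_toSphere_le [Nontrivial E] {f : E → ℝ≥0∞} (hf : Measurable f)
    (hmono : ∀ ω ∈ sphere (0 : E) 1, ∀ r ∈ Ioo (0 : ℝ) 1, f ω ≤ f (r • ω)) :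
    ∫⁻ ω : sphere (0 : E) 1, f ω ∂μ.toSphere ≤ dim E * ∫⁻ z in ball 0 1, f z ∂μ := by
  have hn : dim E - 1 + 1 = dim E := Nat.sub_add_cancel Module.finrank_pos
  have hn0 : (dim E : ℝ≥0∞) ≠ 0 := by exact_mod_cast Module.finrank_pos.ne'
  have hradial :
      ∫⁻ r in Ioo (0 : ℝ) 1, ENNReal.ofReal (r ^ (dim E - 1)) = (dim E : ℝ≥0∞)⁻¹ := by
    rw [lintegral_Ioo_zero_one_pow, ← Nat.cast_add_one, hn]
  have hball : ∀ ω : sphere (0 : E) 1, (dim E : ℝ≥0∞)⁻¹ * f ω ≤ ∫⁻ r in Ioi (0 : ℝ),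
      ENNReal.ofReal (r ^ (dim E - 1)) * (ball 0 1).indicator f (r • (ω : E)) := fun ω => by
    calc
      _ = ∫⁻ r in Ioo (0 : ℝ) 1, ENNReal.ofReal (r ^ (dim E - 1)) * f ω := by
        rw [lintegral_mul_const _ (by fun_prop), hradial]
      _ ≤ ∫⁻ r in Ioo (0 : ℝ) 1,
            ENNReal.ofReal (r ^ (dim E - 1)) * (ball 0 1).indicator f (r • (ω : E)) := by
        refine setLIntegral_mono' measurableSet_Ioo fun r hr => ?_
        have hrω : r • (ω : E) ∈ ball (0 : E) 1 := by
          simpa [norm_smul, norm_eq_of_mem_sphere ω, abs_of_pos hr.1] using hr.2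
        rw [indicator_of_mem hrω]
        gcongr
        exact hmono ω ω.2 r hr
      _ ≤ _ := lintegral_mono_set Ioo_subset_Ioi_self
  calc
    _ = dim E * ∫⁻ ω : sphere (0 : E) 1, (dim E : ℝ≥0∞)⁻¹ * f ω ∂μ.toSphere := by
      rw [lintegral_const_mul _ (by fun_prop), ← mul_assoc,
        ENNReal.mul_inv_cancel hn0 (ENNReal.natCast_ne_top _), one_mul]
    _ ≤ _ := by
      rw [← lintegral_indicator measurableSet_ball,
        lintegral_eq_lintegral_toSphere μ (hf.indicator measurableSet_ball)]
      gcongr with ω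
      exact hball ω

lemma lintegral_ball_comp_le {ℓ : E →L[ℝ] ℝ} {e : E} (he : ℓ e = 1) {g : ℝ → ℝ≥0∞}
    (hg : Measurable g) {K : ℝ≥0∞} (hK : ∀ a, ∫⁻ t in Icc (0 : ℝ) 1, g (a + t) ≤ K) (R : ℝ) :
    ∫⁻ z in ball 0 R, g (ℓ z) ∂μ ≤ K * μ (ball 0 (R + ‖e‖)) := by
  have hshift : ∀ t ∈ Icc (0 : ℝ) 1,
      ∫⁻ z in ball 0 R, g (ℓ z) ∂μ ≤ ∫⁻ z in ball 0 (R + ‖e‖), g (ℓ z + t) ∂μ := fun t ht => by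
    rw [← lintegral_indicator measurableSet_ball, ← lintegral_indicator measurableSet_ball,
      ← lintegral_add_right_eq_self _ (t • e)]
    refine lintegral_mono fun z => ?_
    by_cases hz : z + t • e ∈ ball (0 : E) R
    · have hte : ‖t • e‖ ≤ ‖e‖ := by
        rw [norm_smul, norm_of_nonneg ht.1]
        exact mul_le_of_le_one_left (norm_nonneg e) ht.2
      have hz' : z ∈ ball (0 : E) (R + ‖e‖) := mem_ball_zero_iff.2 <| by
        linarith [mem_ball_zero_iff.1 hz, norm_sub_le (z + t • e) (t • e),
          congrArg norm (add_sub_cancel_right z (t • e))]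
      simp [indicator_of_mem hz, indicator_of_mem hz', he]
    · simp [indicator_of_notMem hz]
  calc
    _ = ∫⁻ _ in Icc (0 : ℝ) 1, ∫⁻ z in ball 0 R, g (ℓ z) ∂μ := by simp
    _ ≤ ∫⁻ t in Icc (0 : ℝ) 1, ∫⁻ z in ball 0 (R + ‖e‖), g (ℓ z + t) ∂μ :=
      setLIntegral_mono' measurableSet_Icc hshift
    _ = ∫⁻ z in ball 0 (R + ‖e‖), (∫⁻ t in Icc (0 : ℝ) 1, g (ℓ z + t)) ∂μ :=
      lintegral_lintegral_swap (by fun_prop)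
    _ ≤ ∫⁻ _ in ball 0 (R + ‖e‖), K ∂μ := lintegral_mono fun z => hK (ℓ z)
    _ = _ := setLIntegral_const _ _

lemma lintegral_ball_enorm_rpow_lt_top [Nontrivial E] {s : ℝ} (hs : -(dim E : ℝ) < s) (R : ℝ) :
    ∫⁻ z in ball 0 R, ‖z‖ₑ ^ s ∂μ < ∞ := by
  have hdim : 1 ≤ dim E := Module.finrank_pos
  have hint : IntegrableOn (fun z : E => ‖z‖ ^ s) (ball 0 R) μ := by
    rw [integrableOn_fun_norm_addHaar (μ := μ) (f := fun t : ℝ => t ^ s)]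
    have hrpow : IntegrableOn (fun t : ℝ => t ^ ((dim E : ℝ) - 1 + s)) (Ioo 0 R) :=
      ((intervalIntegral.intervalIntegrable_rpow' (a := 0) (b := R) (by linarith)).1).mono_set
        Ioo_subset_Ioc_self
    refine hrpow.congr_fun (fun t ht => ?_) measurableSet_Ioo
    simp only [smul_eq_mul]
    rw [rpow_add ht.1, ← rpow_natCast, Nat.cast_sub hdim, Nat.cast_one]
  refine lt_of_eq_of_lt (lintegral_congr_ae ?_) hint.lintegral_lt_top
  filter_upwards [ae_restrict_of_ae (compl_mem_ae_iff.2 (measure_singleton (0 : E)))] with z hz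
  rw [← ENNReal.ofReal_rpow_of_pos (norm_pos_iff.2 hz), ofReal_norm]

lemma exists_lintegral_unit_interval_enorm_rpow_le {s : ℝ} (hs0 : 0 ≤ s) (hs1 : s < 1) :
    ∃ K : ℝ≥0∞, K ≠ ∞ ∧ ∀ a : ℝ, ∫⁻ t in Icc (0 : ℝ) 1, ‖a + t‖ₑ ^ (-s) ≤ K := by
  have hfin : ∫⁻ t in ball (0 : ℝ) 1, ‖t‖ₑ ^ (-s) < ∞ :=
    lintegral_ball_enorm_rpow_lt_top _ (by simpa using hs1) 1
  refine ⟨(∫⁻ t in ball (0 : ℝ) 1, ‖t‖ₑ ^ (-s)) + 1, by finiteness, fun a => ?_⟩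
  have hsplit : ∀ t : ℝ,
      ‖t‖ₑ ^ (-s) ≤ (ball (0 : ℝ) 1).indicator (fun t => ‖t‖ₑ ^ (-s)) t + 1 := fun t => by
    by_cases ht : t ∈ ball (0 : ℝ) 1
    · simp [indicator_of_mem ht]
    · have ht' : 1 ≤ ‖t‖ₑ := by simpa [← ofReal_norm] using ht
      simpa [indicator_of_notMem ht, ENNReal.rpow_neg] using
        (ENNReal.one_rpow s).ge.trans (ENNReal.rpow_le_rpow ht' hs0)
  calc
    _ ≤ ∫⁻ t in Icc (0 : ℝ) 1,
          ((ball (0 : ℝ) 1).indicator (fun t => ‖t‖ₑ ^ (-s)) (a + t) + 1) :=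
      lintegral_mono fun t => hsplit _
    _ ≤ (∫⁻ t, (ball (0 : ℝ) 1).indicator (fun t => ‖t‖ₑ ^ (-s)) (a + t)) + 1 := by
      rw [lintegral_add_right _ measurable_const]
      gcongr
      · exact Measure.restrict_le_self
      · simp
    _ = _ := by
      rw [lintegral_add_left_eq_self (fun t => (ball (0 : ℝ) 1).indicator _ t),
        lintegral_indicator measurableSet_ball]

lemma lintegral_ball_enorm_apply_rpow_lt_top {ℓ : E →L[ℝ] ℝ} (hℓ : ℓ ≠ 0) {s : ℝ} (hs0 : 0 ≤ s)
    (hs1 : s < 1) (R : ℝ) : ∫⁻ z in ball 0 R, ‖ℓ z‖ₑ ^ (-s) ∂μ < ∞ := by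
  obtain ⟨v, hv⟩ := DFunLike.ne_iff.1 hℓ
  have he : ℓ ((ℓ v)⁻¹ • v) = 1 := by simpa using inv_mul_cancel₀ hv
  obtain ⟨K, hK, hKle⟩ := exists_lintegral_unit_interval_enorm_rpow_le hs0 hs1
  exact (lintegral_ball_comp_le μ he (g := fun t => ‖t‖ₑ ^ (-s)) (by fun_prop) hKle R).trans_lt
    (ENNReal.mul_lt_top hK.lt_top measure_ball_lt_top)

lemma lintegral_toSphere_enorm_apply_rpow_lt_top [Nontrivial E] [NormedSpace ℝ F] {A : E →L[ℝ] F}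
    (hA : A ≠ 0) {s : ℝ} (hs0 : 0 ≤ s) (hs1 : s < 1) :
    ∫⁻ ω : sphere (0 : E) 1, ‖A ω‖ₑ ^ (-s) ∂μ.toSphere < ∞ := by
  obtain ⟨u, hu⟩ := DFunLike.ne_iff.1 hA
  obtain ⟨g, hg, hgu⟩ := exists_dual_vector ℝ (A u) (norm_ne_zero_iff.2 hu)
  have hgA : g ∘L A ≠ 0 := DFunLike.ne_iff.2 ⟨u, by simpa [hgu] using hu⟩
  have hle : ∀ z, ‖(g ∘L A) z‖ₑ ≤ ‖A z‖ₑ := fun z =>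
    enorm_le_iff_norm_le.2 (by simpa [hg] using g.le_opNorm (A z))
  calc
    _ ≤ dim E * ∫⁻ z in ball 0 1, ‖A z‖ₑ ^ (-s) ∂μ := by
      refine lintegral_toSphere_le μ (A.continuous.enorm.measurable.pow_const _) fun ω _ r hr =>
        ennreal_rpow_neg_le_rpow_neg hs0 ?_
      rw [map_smul, enorm_smul]
      refine mul_le_of_le_one_left' ?_
      simpa [← ofReal_norm, abs_of_pos hr.1] using hr.2.le
    _ ≤ dim E * ∫⁻ z in ball 0 1, ‖(g ∘L A) z‖ₑ ^ (-s) ∂μ := by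
      gcongr dim E * ?_
      exact lintegral_mono fun z => ennreal_rpow_neg_le_rpow_neg hs0 (hle z)
    _ < ∞ := ENNReal.mul_lt_top (ENNReal.natCast_lt_top _)
      (lintegral_ball_enorm_apply_rpow_lt_top μ hgA hs0 hs1 1)

/-- The bound is uniform in `x` and `ε` because the integral along each ray from `x` is dominated by
a scale-invariant Beta integral. -/
lemma lintegral_cylinder_le [Nontrivial E] [InnerProductSpace ℝ F] (A : E →L[ℝ] F) {ε η : ℝ}
    (hη0 : 0 < η) (hη1 : η < 1) {x : E} (hx : ‖A x‖ < ε) :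
    ∫⁻ y in {y | ‖A y‖ < ε},
        ENNReal.ofReal ((ε ^ 2 - ‖A y‖ ^ 2) ^ (-η) * ‖y - x‖ ^ (2 * η - dim E)) ∂μ ≤
      ENNReal.ofReal (ProbabilityTheory.beta η (1 - η)) *
        ∫⁻ ω : sphere (0 : E) 1, ‖A ω‖ₑ ^ (-(2 * η)) ∂μ.toSphere := by
  have hA : Measurable fun y => ‖A y‖ := A.continuous.norm.measurable
  have hcyl : MeasurableSet {y | ‖A y‖ < ε} := measurableSet_lt hA measurable_const
  have hAω : Measurable fun ω : sphere (0 : E) 1 => ‖A ω‖ₑ ^ (-(2 * η)) :=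
    (A.continuous.comp continuous_subtype_val).enorm.measurable.pow_const _
  have hdim : ((dim E - 1 : ℕ) : ℝ) = dim E - 1 := by
    rw [Nat.cast_sub Module.finrank_pos, Nat.cast_one]
  rw [← lintegral_indicator hcyl,
    lintegral_eq_lintegral_toSphere_add_smul μ (Measurable.indicator (by fun_prop) hcyl) x,
    ← lintegral_const_mul _ hAω]
  refine lintegral_mono fun ω => le_trans ?_ (lintegral_ray_le (v := A x) (w := A ω) hx hη0 hη1)
  have hray : MeasurableSet {r : ℝ | ‖A x + r • A ω‖ < ε} :=
    (isOpen_lt (by fun_prop) continuous_const).measurableSet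
  rw [inter_comm, ← Measure.restrict_restrict hray, ← lintegral_indicator hray]
  refine setLIntegral_mono' measurableSet_Ioi fun r hr => ?_
  rw [mem_Ioi] at hr
  have hrω : ‖r • (ω : E)‖ = r := by simp [norm_smul, abs_of_pos hr]
  by_cases hrε : ‖A x + r • A ω‖ < ε
  · have hy : x + r • (ω : E) ∈ {y | ‖A y‖ < ε} := by simpa using hrε
    have hr' : r ∈ {r : ℝ | ‖A x + r • A ω‖ < ε} := hrε
    rw [indicator_of_mem hy, indicator_of_mem hr',
      ← ENNReal.ofReal_mul (by positivity), add_sub_cancel_left, hrω, map_add, map_smul,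
      ← rpow_natCast, hdim, mul_left_comm, ← rpow_add hr]
    ring_nf
    rfl
  · simp [indicator, hrε]

lemma lintegral_compl_ball_enorm_rpow_lt_top {b r : ℝ} (hr : 0 < r) (hb : dim E < b) :
    ∫⁻ z in (ball 0 r)ᶜ, ‖z‖ₑ ^ (-b) ∂μ < ∞ := by
  have hle : ∀ z ∈ (ball (0 : E) r)ᶜ,
      ‖z‖ₑ ^ (-b) ≤ ENNReal.ofReal ((1 + r⁻¹)⁻¹ ^ (-b) * (1 + ‖z‖) ^ (-b)) := fun z hz => by
    have hrz : r ≤ ‖z‖ := by simpa using hz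
    have hz0 : 0 < ‖z‖ := hr.trans_le hrz
    have hone : 1 ≤ r⁻¹ * ‖z‖ := (inv_mul_cancel₀ hr.ne').ge.trans (by gcongr)
    rw [← ofReal_norm, ENNReal.ofReal_rpow_of_pos hz0,
      ← mul_rpow (by positivity) (by positivity)]
    refine ENNReal.ofReal_le_ofReal (rpow_le_rpow_of_nonpos (by positivity) ?_ (by linarith))
    rw [inv_mul_le_iff₀ (by positivity)]
    linarith
  exact (setLIntegral_mono' measurableSet_ball.compl hle).trans_lt
    ((integrable_one_add_norm hb).const_mul _).integrableOn.lintegral_lt_top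

lemma lintegral_compl_ball_enorm_rpow_mul_enorm_sub_rpow_le {a b : ℝ} (ha : 0 ≤ a) (hb : 0 ≤ b)
    (r : ℝ) (x : E) :
    ∫⁻ y in (ball x r)ᶜ, ‖y‖ₑ ^ (-a) * ‖y - x‖ₑ ^ (-b) ∂μ ≤
      ENNReal.ofReal r ^ (-b) * (∫⁻ z in ball 0 1, ‖z‖ₑ ^ (-a) ∂μ) +
        ∫⁻ z in (ball 0 r)ᶜ, ‖z‖ₑ ^ (-b) ∂μ := by
  have hsplit : ∀ y ∈ (ball x r)ᶜ, ‖y‖ₑ ^ (-a) * ‖y - x‖ₑ ^ (-b) ≤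
      ENNReal.ofReal r ^ (-b) * (ball 0 1).indicator (fun z => ‖z‖ₑ ^ (-a)) y +
        ‖y - x‖ₑ ^ (-b) := fun y hy => by
    by_cases hy1 : y ∈ ball (0 : E) 1
    · have hry : ENNReal.ofReal r ≤ ‖y - x‖ₑ := by
        rw [← ofReal_norm]
        exact ENNReal.ofReal_le_ofReal (by simpa [dist_eq_norm] using hy)
      rw [indicator_of_mem hy1, mul_comm]
      refine le_add_right ?_
      exact mul_le_mul_left (ennreal_rpow_neg_le_rpow_neg hb hry) _
    · have hone : ‖y‖ₑ ^ (-a) ≤ 1 := by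
        simpa using ennreal_rpow_neg_le_rpow_neg ha
          (show 1 ≤ ‖y‖ₑ by simpa [← ofReal_norm] using hy1)
      exact le_add_left (mul_le_of_le_one_left' hone)
  have htranslate : ∫⁻ y in (ball x r)ᶜ, ‖y - x‖ₑ ^ (-b) ∂μ =
      ∫⁻ z in (ball 0 r)ᶜ, ‖z‖ₑ ^ (-b) ∂μ := by
    rw [← lintegral_indicator measurableSet_ball.compl,
      ← lintegral_indicator measurableSet_ball.compl,
      ← lintegral_sub_right_eq_self ((ball 0 r)ᶜ.indicator fun z => ‖z‖ₑ ^ (-b)) x]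
    simp [indicator, dist_eq_norm]
  calc
    _ ≤ ∫⁻ y in (ball x r)ᶜ, (ENNReal.ofReal r ^ (-b) *
          (ball 0 1).indicator (fun z => ‖z‖ₑ ^ (-a)) y + ‖y - x‖ₑ ^ (-b)) ∂μ :=
      setLIntegral_mono' measurableSet_ball.compl hsplit
    _ = ENNReal.ofReal r ^ (-b) *
          (∫⁻ y in (ball x r)ᶜ, (ball 0 1).indicator (fun z => ‖z‖ₑ ^ (-a)) y ∂μ) +
        ∫⁻ z in (ball 0 r)ᶜ, ‖z‖ₑ ^ (-b) ∂μ := by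
      rw [lintegral_add_right _ (by fun_prop), lintegral_const_mul _
        (Measurable.indicator (by fun_prop) measurableSet_ball), htranslate]
    _ ≤ _ := by
      rw [← lintegral_indicator (s := ball 0 1) measurableSet_ball]
      gcongr ENNReal.ofReal r ^ (-b) * ?_ + _
      exact lintegral_mono' Measure.restrict_le_self le_rfl

end HaarIntegrals

section Coordinates

variable {d : ℕ}

lemma measurable_lastCoord : Measurable (lastCoord d) := by
  unfold lastCoord
  split_ifs <;> fun_prop

lemma measurable_tnorm : Measurable (tnorm d) := by
  unfold tnorm
  refine (Finset.measurable_sum _ fun i _ => ?_).sqrt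
  split_ifs <;> fun_prop

lemma tnorm_nonneg (y : Ed d) : 0 ≤ tnorm d y := Real.sqrt_nonneg _

variable [NeZero d]

lemma lastCoord_eq_apply (y : Ed d) : lastCoord d y = y (Fin.rev 0) := by
  simp [lastCoord, NeZero.pos d, Fin.rev]

lemma norm_eLast : ‖eLast d‖ = 1 := by simp [eLast, NeZero.pos d]

lemma lastCoord_eq_inner (y : Ed d) : lastCoord d y = ⟪eLast d, y⟫ := by
  simp [lastCoord, eLast, NeZero.pos d, EuclideanSpace.inner_single_left]

lemma abs_lastCoord_le_norm (y : Ed d) : |lastCoord d y| ≤ ‖y‖ := by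
  simpa [lastCoord_eq_inner, norm_eLast] using abs_real_inner_le_norm (eLast d) y

lemma tnorm_sq (y : Ed d) : tnorm d y ^ 2 = ‖y‖ ^ 2 - lastCoord d y ^ 2 := by
  have hlast : (∑ i : Fin d, if (i : ℕ) < d - 1 then 0 else y i ^ 2) = lastCoord d y ^ 2 := by
    rw [Finset.sum_eq_single ⟨d - 1, Nat.sub_lt (NeZero.pos d) Nat.one_pos⟩]
    · simp [lastCoord, NeZero.pos d]
    · intro i _ hi
      have hi' : (i : ℕ) ≠ d - 1 := fun h => hi (Fin.ext h)
      rw [if_pos (by omega)]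
    · simp
  rw [tnorm, Real.sq_sqrt (Finset.sum_nonneg fun i _ => by split_ifs <;> positivity),
    eq_sub_iff_add_eq, ← hlast, ← Finset.sum_add_distrib, EuclideanSpace.real_norm_sq_eq]
  refine Finset.sum_congr rfl fun i _ => ?_
  split_ifs <;> simp

variable (d) in
/-- The orthogonal projection `y ↦ ỹ` onto the hyperplane orthogonal to `e_d`, as a linear map
from `ℝ^d` to itself; thus `tnorm d y = ‖tproj d y‖`. -/
noncomputable def tproj : Ed d →L[ℝ] Ed d := (ℝ ∙ eLast d)ᗮ.starProjection

lemma tproj_apply (y : Ed d) : tproj d y = y - lastCoord d y • eLast d := by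
  rw [tproj, Submodule.starProjection_orthogonal_val,
    Submodule.starProjection_unit_singleton ℝ norm_eLast, lastCoord_eq_inner]

lemma tproj_eLast : tproj d (eLast d) = 0 := by
  simp [tproj_apply, lastCoord_eq_inner, norm_eLast]

lemma tnorm_eq_norm_tproj (y : Ed d) : tnorm d y = ‖tproj d y‖ := by
  rw [← sq_eq_sq₀ (tnorm_nonneg y) (norm_nonneg _), tnorm_sq, tproj_apply, norm_sub_sq_real,
    inner_smul_right, real_inner_comm, ← lastCoord_eq_inner, norm_smul, norm_eLast, mul_one,
    norm_eq_abs, sq_abs]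
  ring

lemma tproj_ne_zero (hd : 2 ≤ d) : tproj d ≠ 0 := by
  have hlast : (0 : Fin d) ≠ Fin.rev 0 := by
    rw [Ne, Fin.ext_iff, Fin.val_rev]
    simp
    omega
  have hone : tnorm d (EuclideanSpace.single 0 1) ^ 2 = 1 := by
    simp [tnorm_sq, lastCoord_eq_apply, hlast]
  intro h
  simp [tnorm_eq_norm_tproj, h] at hone

lemma norm_sub_eLast_sq (y : Ed d) :
    ‖y - eLast d‖ ^ 2 = tnorm d y ^ 2 + (lastCoord d y - 1) ^ 2 := by
  rw [tnorm_sq, norm_sub_sq_real, real_inner_comm, ← lastCoord_eq_inner, norm_eLast]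
  ring

end Coordinates

section CurvilinearProjection

variable {d : ℕ}

lemma inversion_eq_euclideanGeometry_inversion (y : Ed d) :
    inversion d y = EuclideanGeometry.inversion 0 1 y := by
  simp [inversion, EuclideanGeometry.inversion_def]

lemma inversion_involutive : Function.Involutive (inversion d) := fun y => by
  simp only [inversion_eq_euclideanGeometry_inversion,
    EuclideanGeometry.inversion_inversion _ one_ne_zero]

lemma measurable_inversion : Measurable (inversion d) := by
  unfold inversion
  fun_prop

lemma measurable_ystar : Measurable (ystar d) := by
  have := measurable_inversion (d := d)
  unfold ystar
  fun_prop

lemma Lspindle_eq_preimage (ε : ℝ) :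
    Lspindle d ε = inversion d ⁻¹' Vcone d (2 * arctan ε) :=
  congrFun (image_eq_preimage_of_inverse inversion_involutive inversion_involutive) _

lemma measurableSet_Lspindle (ε : ℝ) : MeasurableSet (Lspindle d ε) := by
  rw [Lspindle_eq_preimage]
  refine measurable_inversion (measurableSet_lt ?_ (measurable_lastCoord.comp ?_)) <;> fun_prop

lemma mem_cone_two_mul_arctan_iff {ε : ℝ} {p : Ed d} :
    p ∈ cone d (2 * arctan ε) ↔ ‖p‖ - lastCoord d p < ε ^ 2 * (‖p‖ + lastCoord d p) := by
  have hε : 0 < 1 + ε ^ 2 := by positivity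
  have hcos : cos (2 * arctan ε) = (1 - ε ^ 2) / (1 + ε ^ 2) := by
    rw [cos_two_mul, cos_sq_arctan]
    field_simp
    ring
  rw [cone, mem_ofPred_eq, hcos, ← mul_div_assoc, div_lt_iff₀ hε]
  constructor <;> intro h <;> linarith

variable [NeZero d]

/-- This is the half-angle formula for the tangent of the angle between `Ty - e_d / 2` and
`e_d`. -/
lemma tnorm_ystar {y p : Ed d} (hp : p = inversion d y - (1 / 2 : ℝ) • eLast d)
    (hpos : 0 < lastCoord d p) :
    tnorm d (ystar d y) = tnorm d p / (‖p‖ + lastCoord d p) := by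
  have hnorm : 0 < ‖p‖ := hpos.trans_le ((le_abs_self _).trans (abs_lastCoord_le_norm p))
  have hsq : ‖(1 / 2 : ℝ) • eLast d + (2 * ‖p‖)⁻¹ • p‖ ^ 2 =
      (‖p‖ + lastCoord d p) / (2 * ‖p‖) := by
    rw [norm_add_sq_real, norm_smul, norm_smul, inner_smul_left, inner_smul_right,
      ← lastCoord_eq_inner, norm_eLast]
    simp
    field_simp
    ring
  rw [ystar, ← hp, inversion, hsq, tnorm_eq_norm_tproj, map_smul, map_add, map_smul, map_smul,
    tproj_eLast, smul_zero, zero_add, norm_smul, norm_smul, ← tnorm_eq_norm_tproj,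
    norm_of_nonneg (by positivity), norm_of_nonneg (by positivity)]
  field_simp

lemma lastCoord_inversion_sub {y : Ed d} (hy : y ≠ 0) :
    lastCoord d (inversion d y - (1 / 2 : ℝ) • eLast d) =
      (1 - ‖y - eLast d‖ ^ 2) / (2 * ‖y‖ ^ 2) := by
  have hy' : ‖y‖ ≠ 0 := norm_ne_zero_iff.2 hy
  rw [lastCoord_eq_inner, inner_sub_right, inversion, inner_smul_right, inner_smul_right,
    norm_sub_sq_real, real_inner_comm, real_inner_self_eq_norm_sq, norm_eLast]
  field_simp
  ring

lemma tnorm_inversion_sub (y : Ed d) :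
    tnorm d (inversion d y - (1 / 2 : ℝ) • eLast d) = tnorm d y / ‖y‖ ^ 2 := by
  rw [tnorm_eq_norm_tproj, map_sub, map_smul, tproj_eLast, smul_zero, sub_zero, inversion,
    map_smul, norm_smul, ← tnorm_eq_norm_tproj, norm_of_nonneg (by positivity), inv_mul_eq_div]

lemma ne_zero_of_mem_ball_eLast {y : Ed d} (hy : y ∈ ball (eLast d) 1) : y ≠ 0 := by
  rintro rfl
  simp [norm_eLast] at hy

lemma lastCoord_inversion_sub_pos {y : Ed d} (hy : y ∈ ball (eLast d) 1) :
    0 < lastCoord d (inversion d y - (1 / 2 : ℝ) • eLast d) := by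
  have hy0 : 0 < ‖y‖ := norm_pos_iff.2 (ne_zero_of_mem_ball_eLast hy)
  have hy1 : ‖y - eLast d‖ ^ 2 < 1 :=
    pow_lt_one₀ (norm_nonneg _) (mem_ball_iff_norm.1 hy) two_ne_zero
  rw [lastCoord_inversion_sub (norm_pos_iff.1 hy0)]
  exact div_pos (sub_pos.2 hy1) (by positivity)

/-- In the plane spanned by `e_d` and `y`, with coordinates `(ρ, τ)`, the circles through `0` and
`2 e_d` are the curves `ρ ^ 2 + (τ - 1) ^ 2 + κ * ρ = 1`; equate `κ` for `y` and `y*`. -/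
lemma tnorm_ystar_mul_one_sub {y : Ed d} (hy : y ∈ ball (eLast d) 1) :
    tnorm d (ystar d y) * (1 - ‖y - eLast d‖ ^ 2) = tnorm d y * (1 - tnorm d (ystar d y) ^ 2) := by
  have hy0 : ‖y‖ ≠ 0 := norm_ne_zero_iff.2 (ne_zero_of_mem_ball_eLast hy)
  set p := inversion d y - (1 / 2 : ℝ) • eLast d with hp
  have hpos : 0 < lastCoord d p := lastCoord_inversion_sub_pos hy
  have hhalf : tnorm d (ystar d y) * (2 * lastCoord d p) =
      tnorm d p * (1 - tnorm d (ystar d y) ^ 2) := by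
    rw [tnorm_ystar hp hpos]
    field_simp
    rw [tnorm_sq]
    ring
  rw [hp, lastCoord_inversion_sub (norm_ne_zero_iff.1 hy0), tnorm_inversion_sub] at hhalf
  field_simp at hhalf
  exact hhalf

lemma mem_Lspindle_iff_tnorm_ystar_lt {ε : ℝ} (hε : 0 ≤ ε) {y : Ed d}
    (hy : y ∈ ball (eLast d) 1) : y ∈ Lspindle d ε ↔ tnorm d (ystar d y) < ε := by
  set p := inversion d y - (1 / 2 : ℝ) • eLast d with hp
  have hpos : 0 < lastCoord d p := lastCoord_inversion_sub_pos hy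
  have hden : 0 < ‖p‖ + lastCoord d p := by positivity
  have hsq : tnorm d (ystar d y) ^ 2 * (‖p‖ + lastCoord d p) = ‖p‖ - lastCoord d p := by
    rw [tnorm_ystar hp hpos, div_pow, tnorm_sq]
    field_simp
    ring
  rw [Lspindle_eq_preimage, mem_preimage, Vcone, mem_ofPred_eq, ← hp, mem_cone_two_mul_arctan_iff,
    ← hsq, mul_lt_mul_iff_left₀ hden, sq_lt_sq₀ (tnorm_nonneg _) hε]

lemma tnorm_ystar_sub_tnorm_mul {y : Ed d} (hy : y ∈ ball (eLast d) 1) :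
    (tnorm d (ystar d y) - tnorm d y) * (1 + tnorm d (ystar d y) * tnorm d y) =
      tnorm d (ystar d y) * (lastCoord d y - 1) ^ 2 := by
  have hcircle := tnorm_ystar_mul_one_sub hy
  rw [norm_sub_eLast_sq] at hcircle
  linear_combination hcircle

lemma tnorm_le_tnorm_ystar {y : Ed d} (hy : y ∈ ball (eLast d) 1) :
    tnorm d y ≤ tnorm d (ystar d y) := by
  have hρ := tnorm_nonneg y
  have hρ' := tnorm_nonneg (ystar d y)
  have hden : 0 < 1 + tnorm d (ystar d y) * tnorm d y := by positivity
  refine sub_nonneg.1 (nonneg_of_mul_nonneg_left ?_ hden)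
  rw [tnorm_ystar_sub_tnorm_mul hy]
  positivity

lemma tnorm_ystar_sub_tnorm_le {y : Ed d} (hy : y ∈ ball (eLast d) 1) :
    tnorm d (ystar d y) - tnorm d y ≤ tnorm d (ystar d y) * (lastCoord d y - 1) ^ 2 := by
  rw [← tnorm_ystar_sub_tnorm_mul hy]
  exact le_mul_of_one_le_right (sub_nonneg.2 (tnorm_le_tnorm_ystar hy))
    (le_add_of_nonneg_right (mul_nonneg (tnorm_nonneg _) (tnorm_nonneg _)))

lemma tnorm_ystar_eq_tnorm {y : Ed d} (hy : y ∈ ball (eLast d) 1) (hyF : y ∈ hyperF d) :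
    tnorm d (ystar d y) = tnorm d y := by
  refine le_antisymm ?_ (tnorm_le_tnorm_ystar hy)
  simpa [show lastCoord d y = 1 from hyF] using tnorm_ystar_sub_tnorm_le hy

end CurvilinearProjection

section FractionalLaplacian

variable {d : ℕ} {α : ℝ} {Φ : Ed d → ℝ} {x : Ed d}

lemma fracLapAt_of_integrable
    (h : Integrable fun y => (Φ y - Φ x) * ‖y - x‖ ^ (-(d : ℝ) - α)) :
    fracLapAt d α Φ x (fracConst d α * ∫ y, (Φ y - Φ x) * ‖y - x‖ ^ (-(d : ℝ) - α)) := by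
  have hset : ∀ δ : ℝ, MeasurableSet {y : Ed d | δ < ‖y - x‖} := fun δ =>
    measurableSet_lt measurable_const (by fun_prop)
  refine Tendsto.const_mul _ ?_
  simp_rw [← integral_indicator (hset _)]
  refine tendsto_integral_filter_of_dominated_convergence _
    (.of_forall fun δ => h.aestronglyMeasurable.indicator (hset δ))
    (.of_forall fun δ => .of_forall fun y => norm_indicator_le_norm_self _ _) h.norm
    (.of_forall fun y => ?_)
  rcases eq_or_ne y x with rfl | hyx
  · refine tendsto_const_nhds.congr fun δ => ?_
    simp [indicator]
  · have hpos : 0 < ‖y - x‖ := norm_pos_iff.2 (sub_ne_zero.2 hyx)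
    refine tendsto_const_nhds.congr' ?_
    filter_upwards [nhdsWithin_le_nhds (Iio_mem_nhds hpos)] with δ hδ
    rw [indicator_of_mem (show y ∈ {y : Ed d | δ < ‖y - x‖} from hδ)]

lemma exists_fracLapAt_of_lintegral_le {M : ℝ≥0∞} (hM : M ≠ ∞) (hΦ : Measurable Φ)
    (hle : ∫⁻ y, ‖(Φ y - Φ x) * ‖y - x‖ ^ (-(d : ℝ) - α)‖ₑ ≤ M) :
    ∃ L, fracLapAt d α Φ x L ∧ |L| ≤ |fracConst d α| * M.toReal := by
  have hmeas : Measurable fun y => (Φ y - Φ x) * ‖y - x‖ ^ (-(d : ℝ) - α) := by fun_prop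
  refine ⟨_, fracLapAt_of_integrable ⟨hmeas.aestronglyMeasurable, hle.trans_lt hM.lt_top⟩, ?_⟩
  rw [abs_mul]
  gcongr
  rw [← norm_eq_abs, ← toReal_enorm]
  exact ENNReal.toReal_mono hM ((enorm_integral_le_lintegral_enorm _).trans hle)

end FractionalLaplacian

section ExitTimes

variable {d : ℕ} {α ε : ℝ}

lemma Cexit_pos (hd : 2 ≤ d) (hα : 0 < α) : 0 < Cexit d α := by
  have hd' : (2 : ℝ) ≤ d := by exact_mod_cast hd
  have hnum : 0 < Real.Gamma (((d : ℝ) - 1) / 2) := Real.Gamma_pos_of_pos (by linarith)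
  have hden : 0 < Real.Gamma (((d : ℝ) - 1 + α) / 2) := Real.Gamma_pos_of_pos (by linarith)
  unfold Cexit
  positivity

lemma measurable_sExit : Measurable (sExit d α ε) := by
  have := measurable_tnorm (d := d)
  unfold sExit
  fun_prop

lemma measurable_sStar : Measurable (sStar d α ε) := by
  classical
  exact Measurable.ite (measurableSet_Lspindle ε) (measurable_sExit.comp measurable_ystar)
    measurable_const

lemma sExit_mem_Icc (hd : 2 ≤ d) (hα : 0 < α) (hε : 0 ≤ ε) (y : Ed d) :
    sExit d α ε y ∈ Icc 0 (Cexit d α * ε ^ α) := by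
  have hC := Cexit_pos hd hα
  refine ⟨mul_nonneg hC.le (by positivity), mul_le_mul_of_nonneg_left ?_ hC.le⟩
  calc
    _ ≤ (ε ^ 2) ^ (α / 2) := by
      gcongr
      exact max_le (sub_le_self _ (sq_nonneg _)) (sq_nonneg ε)
    _ = ε ^ α := by
      rw [← rpow_natCast, ← rpow_mul hε]
      push_cast
      ring_nf

lemma sStar_mem_Icc (hd : 2 ≤ d) (hα : 0 < α) (hε : 0 ≤ ε) (y : Ed d) :
    sStar d α ε y ∈ Icc 0 (Cexit d α * ε ^ α) := by
  have hC := Cexit_pos hd hα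
  unfold sStar
  split_ifs
  · exact sExit_mem_Icc hd hα hε (ystar d y)
  · exact ⟨le_rfl, by positivity⟩

lemma abs_sStar_sub_sExit_le (hd : 2 ≤ d) (hα : 0 < α) (hε : 0 ≤ ε) (y : Ed d) :
    |sStar d α ε y - sExit d α ε y| ≤ Cexit d α * ε ^ α :=
  have hstar := sStar_mem_Icc hd hα hε y
  have hexit := sExit_mem_Icc hd hα hε y
  abs_sub_le_of_nonneg_of_le hstar.1 hstar.2 hexit.1 hexit.2

lemma sExit_eq_zero_of_le_tnorm (hα : α ≠ 0) (hε : 0 ≤ ε) {y : Ed d} (hy : ε ≤ tnorm d y) :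
    sExit d α ε y = 0 := by
  have hneg : ε ^ 2 - tnorm d y ^ 2 ≤ 0 := sub_nonpos.2 (by gcongr)
  rw [sExit, max_eq_right hneg, zero_rpow (by positivity), mul_zero]

lemma sq_sub_sq_sub_max_le {ρ ρ' t : ℝ} (hρ0 : 0 ≤ ρ) (hρ : ρ ≤ ε) (hρρ' : ρ ≤ ρ')
    (ht : t ^ 2 ≤ 1) (hρt : ρ' - ρ ≤ ρ' * t ^ 2) :
    ε ^ 2 - ρ ^ 2 - max (ε ^ 2 - ρ' ^ 2) 0 ≤ 2 * (ε ^ 2 * t ^ 2) := by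
  have hε : 0 ≤ ε := hρ0.trans hρ
  have hρ' : 0 ≤ ρ' := hρ0.trans hρρ'
  rcases le_total ρ' ε with hle | hge
  · calc
      _ ≤ (ρ' - ρ) * (ρ' + ρ) := by linarith [le_max_left (ε ^ 2 - ρ' ^ 2) 0]
      _ ≤ ρ' * t ^ 2 * (ρ' + ρ) := by gcongr
      _ ≤ ε * t ^ 2 * (ε + ε) := by gcongr
      _ = _ := by ring
  · have hεt : ε - ρ ≤ ε * t ^ 2 := by nlinarith
    calc
      _ ≤ (ε - ρ) * (ε + ρ) := by linarith [le_max_right (ε ^ 2 - ρ' ^ 2) 0]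
      _ ≤ ε * t ^ 2 * (ε + ε) := by gcongr
      _ = _ := by ring

lemma abs_sExit_sub_sExit_le {η t : ℝ} (hd : 2 ≤ d) (hα : 0 < α) (hη : 0 ≤ η) (hαη : α / 2 + η ≤ 1)
    (hε1 : ε ≤ 1) {y z : Ed d} (hy : y ∈ cylPi d ε) (hyz : tnorm d y ≤ tnorm d z)
    (ht : t ^ 2 ≤ 1) (hzt : tnorm d z - tnorm d y ≤ tnorm d z * t ^ 2) :
    |sExit d α ε z - sExit d α ε y| ≤ 2 * Cexit d α * ε ^ α *
      ((ε ^ 2 - tnorm d y ^ 2) ^ (-η) * |t| ^ (α + 2 * η)) := by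
  have hρ : tnorm d y < ε := hy
  have hε : 0 < ε := (tnorm_nonneg y).trans_lt hρ
  have hC := Cexit_pos hd hα
  set a := ε ^ 2 - tnorm d y ^ 2 with ha_def
  set b := max (ε ^ 2 - tnorm d z ^ 2) 0
  have ha : 0 < a := sub_pos.2 (pow_lt_pow_left₀ hρ (tnorm_nonneg y) two_ne_zero)
  have hb : 0 ≤ b := le_max_right _ _
  have hba : b ≤ a := max_le (sub_le_sub_left (by gcongr; exact tnorm_nonneg y) _) ha.le
  have hpow : (a - b) ^ (α / 2 + η) ≤ 2 * (ε ^ α * |t| ^ (α + 2 * η)) := by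
    calc
      _ ≤ (2 * (ε ^ 2 * t ^ 2)) ^ (α / 2 + η) :=
        rpow_le_rpow (sub_nonneg.2 hba)
          (sq_sub_sq_sub_max_le (tnorm_nonneg y) hρ.le hyz ht hzt) (by positivity)
      _ = 2 ^ (α / 2 + η) * (ε ^ (α + 2 * η) * |t| ^ (α + 2 * η)) := by
        rw [← sq_abs t, ← mul_pow, mul_rpow two_pos.le (by positivity), ← rpow_natCast,
          ← rpow_mul (by positivity), mul_rpow hε.le (abs_nonneg t)]
        push_cast
        ring_nf
      _ ≤ _ := by
        gcongr ?_ * (?_ * _)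
        · simpa using rpow_le_rpow_of_exponent_le one_le_two hαη
        · exact rpow_le_rpow_of_exponent_ge hε hε1 (by linarith)
  rw [abs_sub_comm, sExit, sExit, ← ha_def, max_eq_left ha.le, ← mul_sub, abs_mul, abs_of_pos hC,
    abs_of_nonneg (sub_nonneg.2 (by gcongr))]
  calc
    _ ≤ Cexit d α * (a ^ (α / 2 - (α / 2 + η)) * (a - b) ^ (α / 2 + η)) := by
      gcongr
      exact rpow_sub_rpow_le_mul_sub_rpow ha hb hba (by linarith) hαη
    _ ≤ Cexit d α * (a ^ (-η) * (2 * (ε ^ α * |t| ^ (α + 2 * η)))) := by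
      rw [sub_add_cancel_left]
      gcongr
    _ = _ := by ring

variable [NeZero d] {y : Ed d}

lemma sStar_eq_sExit_ystar (hα : α ≠ 0) (hε : 0 ≤ ε) (hy : y ∈ ball (eLast d) 1) :
    sStar d α ε y = sExit d α ε (ystar d y) := by
  by_cases h : y ∈ Lspindle d ε
  · rw [sStar, if_pos h, sExit]
  · rw [sStar, if_neg h, sExit_eq_zero_of_le_tnorm hα hε]
    exact not_lt.1 ((mem_Lspindle_iff_tnorm_ystar_lt hε hy).not.1 h)

lemma sStar_eq_sExit_of_mem_hyperF (hα : α ≠ 0) (hε : 0 ≤ ε) (hy : y ∈ ball (eLast d) 1)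
    (hyF : y ∈ hyperF d) : sStar d α ε y = sExit d α ε y := by
  rw [sStar_eq_sExit_ystar hα hε hy, sExit, sExit, tnorm_ystar_eq_tnorm hy hyF]

lemma sStar_eq_sExit_of_le_tnorm (hα : α ≠ 0) (hε : 0 ≤ ε) (hy : y ∈ ball (eLast d) 1)
    (hyε : ε ≤ tnorm d y) : sStar d α ε y = sExit d α ε y := by
  rw [sStar_eq_sExit_ystar hα hε hy, sExit_eq_zero_of_le_tnorm hα hε hyε,
    sExit_eq_zero_of_le_tnorm hα hε (hyε.trans (tnorm_le_tnorm_ystar hy))]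

lemma sq_lastCoord_sub_one_le_one (hy : y ∈ ball (eLast d) 1) : (lastCoord d y - 1) ^ 2 ≤ 1 := by
  have hball : ‖y - eLast d‖ ^ 2 ≤ 1 := pow_le_one₀ (norm_nonneg _) (mem_ball_iff_norm.1 hy).le
  linarith [norm_sub_eLast_sq y, sq_nonneg (tnorm d y)]

lemma abs_sStar_sub_sExit_le_of_mem_cylPi {η : ℝ} (hd : 2 ≤ d) (hα : 0 < α) (hη : 0 ≤ η)
    (hαη : α / 2 + η ≤ 1) (hε1 : ε ≤ 1) (hy : y ∈ ball (eLast d) 1) (hyε : y ∈ cylPi d ε) :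
    |sStar d α ε y - sExit d α ε y| ≤ 2 * Cexit d α * ε ^ α *
      ((ε ^ 2 - tnorm d y ^ 2) ^ (-η) * |lastCoord d y - 1| ^ (α + 2 * η)) := by
  have hε : 0 ≤ ε := (tnorm_nonneg y).trans (le_of_lt hyε)
  rw [sStar_eq_sExit_ystar hα.ne' hε hy]
  exact abs_sExit_sub_sExit_le hd hα hη hαη hε1 hyε (tnorm_le_tnorm_ystar hy)
    (sq_lastCoord_sub_one_le_one hy) (tnorm_ystar_sub_tnorm_le hy)

end ExitTimes

section SingularIntegral

variable {d : ℕ} {α ε r : ℝ} {x y : Ed d}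

lemma enorm_rieszH_mul_sub_le (hd : 2 ≤ d) (hα : 0 < α) (hε : 0 ≤ ε) (x y : Ed d) :
    ‖rieszH d α y * (sStar d α ε y - sExit d α ε y) * ‖y - x‖ ^ (-(d : ℝ) - α)‖ₑ ≤
      ENNReal.ofReal (Cexit d α * ε ^ α) *
        (‖y‖ₑ ^ (-((d : ℝ) - α)) * ‖y - x‖ₑ ^ (-((d : ℝ) + α))) := by
  have hdiff : ‖sStar d α ε y - sExit d α ε y‖ₑ ≤ ENNReal.ofReal (Cexit d α * ε ^ α) := by
    rw [← ofReal_norm]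
    exact ENNReal.ofReal_le_ofReal (abs_sStar_sub_sExit_le hd hα hε y)
  rw [enorm_mul, enorm_mul, mul_comm ‖rieszH d α y‖ₑ, mul_assoc, rieszH, ← neg_sub (d : ℝ) α,
    ← neg_add' (d : ℝ) α]
  gcongr <;> exact enorm_rpow_le_enorm_rpow _ _

lemma exists_lintegral_compl_ball_rieszH_mul_sub_le (hd : 2 ≤ d) (hα : 0 < α) (hαd : α ≤ d)
    (hr : 0 < r) :
    ∃ K : ℝ≥0∞, K ≠ ∞ ∧ ∀ ε : ℝ, 0 ≤ ε → ∀ x : Ed d, ∫⁻ y in (ball x r)ᶜ,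
      ‖rieszH d α y * (sStar d α ε y - sExit d α ε y) * ‖y - x‖ ^ (-(d : ℝ) - α)‖ₑ ≤
        K * ENNReal.ofReal (ε ^ α) := by
  have : Nontrivial (Fin d) := Fin.nontrivial_iff_two_le.2 hd
  have hnear : ∫⁻ z in ball (0 : Ed d) 1, ‖z‖ₑ ^ (-((d : ℝ) - α)) < ∞ :=
    lintegral_ball_enorm_rpow_lt_top volume (by simpa using hα) 1
  have hfar : ∫⁻ z in (ball (0 : Ed d) r)ᶜ, ‖z‖ₑ ^ (-((d : ℝ) + α)) < ∞ :=
    lintegral_compl_ball_enorm_rpow_lt_top volume hr (by simpa using hα)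
  have hrpow : ENNReal.ofReal r ^ (-((d : ℝ) + α)) ≠ ∞ := by
    simp [ENNReal.ofReal_rpow_of_pos hr]
  refine ⟨ENNReal.ofReal (Cexit d α) * (ENNReal.ofReal r ^ (-((d : ℝ) + α)) *
    (∫⁻ z in ball (0 : Ed d) 1, ‖z‖ₑ ^ (-((d : ℝ) - α))) +
      ∫⁻ z in (ball (0 : Ed d) r)ᶜ, ‖z‖ₑ ^ (-((d : ℝ) + α))), by finiteness, fun ε hε x => ?_⟩
  calc
    _ ≤ ∫⁻ y in (ball x r)ᶜ, ENNReal.ofReal (Cexit d α * ε ^ α) *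
          (‖y‖ₑ ^ (-((d : ℝ) - α)) * ‖y - x‖ₑ ^ (-((d : ℝ) + α))) :=
      lintegral_mono fun y => enorm_rieszH_mul_sub_le hd hα hε x y
    _ ≤ _ := by
      rw [lintegral_const_mul _ (by fun_prop), ENNReal.ofReal_mul (Cexit_pos hd hα).le,
        mul_right_comm]
      gcongr
      exact lintegral_compl_ball_enorm_rpow_mul_enorm_sub_rpow_le volume (sub_nonneg.2 hαd)
        (by positivity) r x

variable [NeZero d]

lemma norm_sub_eLast_of_mem_hyperF (hx : x ∈ hyperF d) : ‖x - eLast d‖ = tnorm d x := by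
  rw [← sq_eq_sq₀ (norm_nonneg _) (tnorm_nonneg x), norm_sub_eLast_sq,
    show lastCoord d x = 1 from hx]
  ring

lemma abs_lastCoord_sub_one_le (hx : x ∈ hyperF d) (y : Ed d) :
    |lastCoord d y - 1| ≤ ‖y - x‖ := by
  rw [← show lastCoord d x = 1 from hx, lastCoord_eq_inner, lastCoord_eq_inner, ← inner_sub_right,
    ← lastCoord_eq_inner]
  exact abs_lastCoord_le_norm _

lemma rieszH_le_of_mem_ball (hαd : α ≤ d) (hr : 0 < r) (hy : y ∈ ball (eLast d) (1 - r)) :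
    rieszH d α y ≤ r ^ (α - (d : ℝ)) := by
  have hry : r ≤ ‖y‖ := by
    linarith [norm_sub_norm_le (eLast d) y, norm_eLast (d := d), norm_sub_rev (eLast d) y,
      mem_ball_iff_norm.1 hy]
  exact rpow_le_rpow_of_nonpos hr hry (sub_nonpos.2 hαd)

lemma abs_rieszH_mul_sub_le {η : ℝ} (hd : 2 ≤ d) (hα : 0 < α) (hη : 0 ≤ η) (hαη : α / 2 + η ≤ 1)
    (hε1 : ε ≤ 1) (hr : 0 < r) (hx : x ∈ hyperF d) (hxy : x ≠ y)
    (hyr : y ∈ ball (eLast d) (1 - r)) (hy : y ∈ cylPi d ε) :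
    |rieszH d α y * (sStar d α ε y - sExit d α ε y) * ‖y - x‖ ^ (-(d : ℝ) - α)| ≤
      2 * Cexit d α * r ^ (α - (d : ℝ)) * ε ^ α *
        ((ε ^ 2 - tnorm d y ^ 2) ^ (-η) * ‖y - x‖ ^ (2 * η - d)) := by
  have hαd : α ≤ d := by linarith [show (2 : ℝ) ≤ d by exact_mod_cast hd]
  have hε : 0 ≤ ε := (tnorm_nonneg y).trans (le_of_lt hy)
  have hC := Cexit_pos hd hα
  have hpos : 0 < ‖y - x‖ := norm_pos_iff.2 (sub_ne_zero.2 hxy.symm)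
  have hgap : 0 ≤ ε ^ 2 - tnorm d y ^ 2 :=
    sub_nonneg.2 (pow_le_pow_left₀ (tnorm_nonneg y) (le_of_lt hy) 2)
  rw [abs_mul, abs_mul, abs_of_nonneg (show 0 ≤ rieszH d α y by unfold rieszH; positivity),
    abs_of_nonneg (show 0 ≤ ‖y - x‖ ^ (-(d : ℝ) - α) by positivity)]
  calc
    _ ≤ r ^ (α - (d : ℝ)) * (2 * Cexit d α * ε ^ α *
          ((ε ^ 2 - tnorm d y ^ 2) ^ (-η) * ‖y - x‖ ^ (α + 2 * η))) *
            ‖y - x‖ ^ (-(d : ℝ) - α) := by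
      gcongr ?_ * ?_ * _
      · exact rieszH_le_of_mem_ball hαd hr hyr
      · refine (abs_sStar_sub_sExit_le_of_mem_cylPi hd hα hη hαη hε1
          (ball_subset_ball (by linarith) hyr) hy).trans ?_
        gcongr
        exact abs_lastCoord_sub_one_le hx y
    _ = 2 * Cexit d α * r ^ (α - (d : ℝ)) * ε ^ α * ((ε ^ 2 - tnorm d y ^ 2) ^ (-η) *
          (‖y - x‖ ^ (α + 2 * η) * ‖y - x‖ ^ (-(d : ℝ) - α))) := by ring
    _ = _ := by
      rw [← rpow_add hpos]
      ring_nf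

lemma enorm_rieszH_mul_sub_le_indicator {η : ℝ} (hd : 2 ≤ d) (hα : 0 < α) (hη : 0 ≤ η)
    (hαη : α / 2 + η ≤ 1) (hε0 : 0 ≤ ε) (hε1 : ε ≤ 1) (hr : 0 < r) (hx : x ∈ hyperF d)
    (hyr : y ∈ ball (eLast d) (1 - r)) :
    ‖rieszH d α y * (sStar d α ε y - sExit d α ε y) * ‖y - x‖ ^ (-(d : ℝ) - α)‖ₑ ≤
      ENNReal.ofReal (2 * Cexit d α * r ^ (α - (d : ℝ)) * ε ^ α) * (cylPi d ε).indicator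
        (fun y => ENNReal.ofReal ((ε ^ 2 - tnorm d y ^ 2) ^ (-η) * ‖y - x‖ ^ (2 * η - d))) y := by
  have hy1 : y ∈ ball (eLast d) 1 := ball_subset_ball (by linarith) hyr
  by_cases hy : y ∈ cylPi d ε
  · rcases eq_or_ne x y with rfl | hxy
    · simp [sStar_eq_sExit_of_mem_hyperF hα.ne' hε0 hy1 hx]
    · have hC := Cexit_pos hd hα
      rw [indicator_of_mem hy, ← ENNReal.ofReal_mul (by positivity), ← ofReal_norm]
      exact ENNReal.ofReal_le_ofReal
        (abs_rieszH_mul_sub_le hd hα hη hαη hε1 hr hx hxy hyr hy)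
  · simp [sStar_eq_sExit_of_le_tnorm hα.ne' hε0 hy1 (not_lt.1 hy)]

lemma exists_lintegral_cylPi_le (hd : 2 ≤ d) {η : ℝ} (hη0 : 0 < η) (hη1 : 2 * η < 1) :
    ∃ K : ℝ≥0∞, K ≠ ∞ ∧ ∀ ε : ℝ, ∀ x ∈ cylPi d ε, ∫⁻ y in cylPi d ε,
      ENNReal.ofReal ((ε ^ 2 - tnorm d y ^ 2) ^ (-η) * ‖y - x‖ ^ (2 * η - d)) ≤ K := by
  have hsphere := lintegral_toSphere_enorm_apply_rpow_lt_top (volume : Measure (Ed d))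
    (tproj_ne_zero hd) (by positivity : 0 ≤ 2 * η) hη1
  refine ⟨ENNReal.ofReal (ProbabilityTheory.beta η (1 - η)) * _,
    ENNReal.mul_ne_top ENNReal.ofReal_ne_top hsphere.ne, fun ε x hx => ?_⟩
  have hle := lintegral_cylinder_le volume (tproj d) (ε := ε) hη0 (by linarith)
    (x := x) (by rwa [← tnorm_eq_norm_tproj])
  simpa only [cylPi, ← tnorm_eq_norm_tproj, finrank_euclideanSpace_fin] using hle

lemma exists_lintegral_ball_rieszH_mul_sub_le (hd : 2 ≤ d) (hα : 0 < α) (hα2 : α < 2) (hr : 0 < r) :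
    ∃ K : ℝ≥0∞, K ≠ ∞ ∧ ∀ ε : ℝ, ε + 2 * r ≤ 1 → ∀ x ∈ cylPi d ε ∩ hyperF d, ∫⁻ y in ball x r,
      ‖rieszH d α y * (sStar d α ε y - sExit d α ε y) * ‖y - x‖ ^ (-(d : ℝ) - α)‖ₑ ≤
        K * ENNReal.ofReal (ε ^ α) := by
  obtain ⟨η, hη0, hηα⟩ := exists_between (show 0 < (1 - α / 2) / 2 by linarith)
  obtain ⟨K, hK, hcyl⟩ := exists_lintegral_cylPi_le hd hη0 (by linarith)
  refine ⟨ENNReal.ofReal (2 * Cexit d α * r ^ (α - (d : ℝ))) * K, by finiteness,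
    fun ε hεr x hx => ?_⟩
  have hxε : tnorm d x < ε := hx.1
  have hC := Cexit_pos hd hα
  have hball : ball x r ⊆ ball (eLast d) (1 - r) := ball_subset_ball' <| by
    rw [dist_eq_norm, norm_sub_eLast_of_mem_hyperF hx.2]
    linarith
  have hcylm : MeasurableSet (cylPi d ε) := measurableSet_lt measurable_tnorm measurable_const
  calc
    _ ≤ ∫⁻ y in ball x r, ENNReal.ofReal (2 * Cexit d α * r ^ (α - (d : ℝ)) * ε ^ α) *
          (cylPi d ε).indicator (fun y => ENNReal.ofReal
            ((ε ^ 2 - tnorm d y ^ 2) ^ (-η) * ‖y - x‖ ^ (2 * η - d))) y :=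
      setLIntegral_mono' measurableSet_ball fun y hy =>
        enorm_rieszH_mul_sub_le_indicator hd hα hη0.le (by linarith)
          ((tnorm_nonneg x).trans hxε.le) (by linarith) hr hx.2 (hball hy)
    _ ≤ ENNReal.ofReal (2 * Cexit d α * r ^ (α - (d : ℝ)) * ε ^ α) *
          ∫⁻ y in cylPi d ε, ENNReal.ofReal
            ((ε ^ 2 - tnorm d y ^ 2) ^ (-η) * ‖y - x‖ ^ (2 * η - d)) := by
      rw [lintegral_const_mul' _ _ ENNReal.ofReal_ne_top, ← lintegral_indicator hcylm]
      gcongr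
      exact Measure.restrict_le_self
    _ ≤ _ := by
      rw [ENNReal.ofReal_mul (by positivity), mul_right_comm]
      gcongr
      exact hcyl ε x hx.1

lemma exists_lintegral_rieszH_mul_sub_le (hd : 2 ≤ d) (hα : 0 < α) (hα2 : α < 2) {ε₀ : ℝ}
    (hε₀ : ε₀ < 1) :
    ∃ K : ℝ≥0∞, K ≠ ∞ ∧ ∀ ε ∈ Ioo 0 ε₀, ∀ x ∈ cylPi d ε ∩ hyperF d,
      ∫⁻ y, ‖rieszH d α y * (sStar d α ε y - sExit d α ε y) * ‖y - x‖ ^ (-(d : ℝ) - α)‖ₑ ≤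
        K * ENNReal.ofReal (ε ^ α) := by
  have hαd : α ≤ d := hα2.le.trans (by exact_mod_cast hd)
  have hr : 0 < (1 - ε₀) / 2 := by linarith
  obtain ⟨K, hK, hnear⟩ := exists_lintegral_ball_rieszH_mul_sub_le hd hα hα2 hr
  obtain ⟨K', hK', hfar⟩ := exists_lintegral_compl_ball_rieszH_mul_sub_le hd hα hαd hr
  refine ⟨K + K', by finiteness, fun ε hε x hx => ?_⟩
  rw [← lintegral_add_compl _ (measurableSet_ball (x := x) (ε := (1 - ε₀) / 2)), add_mul]
  exact add_le_add (hnear ε (by linarith [hε.2]) x hx) (hfar ε hε.1.le x)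

end SingularIntegral

theorem fracLap_h_sStar_sub_sExit_general (d : ℕ) (hd : 2 ≤ d) (α : ℝ) (hα : 0 < α) (hα2 : α < 2)
    {ε₀ : ℝ} (hε₀ : ε₀ < 1) :
    ∃ C : ℝ, 0 < C ∧ ∀ ε ∈ Set.Ioo (0 : ℝ) ε₀, ∀ x ∈ cylPi d ε ∩ hyperF d,
      ∃ L : ℝ, fracLapAt d α (fun y => rieszH d α y * (sStar d α ε y - sExit d α ε y)) x L ∧
        |L| ≤ C * ε ^ α := by
  have : NeZero d := ⟨by omega⟩
  obtain ⟨K, hK, hbound⟩ := exists_lintegral_rieszH_mul_sub_le hd hα hα2 hε₀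
  refine ⟨|fracConst d α| * K.toReal + 1, by positivity, fun ε hε x hx => ?_⟩
  have hx1 : x ∈ ball (eLast d) 1 := by
    rw [mem_ball_iff_norm, norm_sub_eLast_of_mem_hyperF hx.2]
    exact (show tnorm d x < ε from hx.1).trans (hε.2.trans hε₀)
  have hzero : sStar d α ε x - sExit d α ε x = 0 :=
    sub_eq_zero.2 (sStar_eq_sExit_of_mem_hyperF hα.ne' hε.1.le hx1 hx.2)
  have hmeas : Measurable fun y : Ed d => rieszH d α y * (sStar d α ε y - sExit d α ε y) :=
    (measurable_norm.pow_const _).mul (measurable_sStar.sub measurable_sExit)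
  obtain ⟨L, hL, hLle⟩ := exists_fracLapAt_of_lintegral_le
    (M := K * ENNReal.ofReal (ε ^ α)) (x := x) (by finiteness) hmeas
    (by simpa only [hzero, mul_zero, sub_zero] using hbound ε hε x hx)
  refine ⟨L, hL, hLle.trans ?_⟩
  have hεα : 0 ≤ ε ^ α := rpow_nonneg hε.1.le α
  rw [ENNReal.toReal_mul, ENNReal.toReal_ofReal hεα, ← mul_assoc]
  exact mul_le_mul_of_nonneg_right (le_add_of_nonneg_right zero_le_one) hεα

/-- `Δ^{α/2}(h (s*_ε - s_ε))(x) = O(ε^α)` for `x ∈ Π_ε ∩ F`. -/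
theorem fracLap_h_sStar_sub_sExit (d : ℕ) (hd : 2 ≤ d) (α : ℝ) (hα : 0 < α) (hα2 : α < 2) :
    ∃ C : ℝ, 0 < C ∧ ∀ ε ∈ Set.Ioo (0 : ℝ) (1 / 20), ∀ x ∈ cylPi d ε ∩ hyperF d,
      ∃ L : ℝ, fracLapAt d α (fun y => rieszH d α y * (sStar d α ε y - sExit d α ε y)) x L ∧
        |L| ≤ C * ε ^ α := by
  exact fracLap_h_sStar_sub_sExit_general d hd α hα hα2 (by norm_num)
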